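/- Let n ≥ 1 and let T_1, …, T_n be pairwise commuting contractions on a complex Hilbert space H. If there exists a nonzero vector e ∈ H such that T_i e = 0 and T_i* e = 0 for every i = 1, …, n (i.e., e lies in the intersection of the joint kernel of the T_i with the orthogonal complement of the closed span of the ranges of the T_i), then (T_1, …, T_n) is not extremal. -/

import Mathlib

open ContinuousLinearMap in
/-- The block operator `X (h, m) = (T h + A m, B m)` on the Hilbert direct sum `H ⊕₂ M`. -/
noncomputable def blockOp {H M : Type*} [NormedAddCommGroup H] [InnerProductSpace ℂ H]
    [NormedAddCommGroup M] [InnerProductSpace ℂ M]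
    (T : H →L[ℂ] H) (A : M →L[ℂ] H) (B : M →L[ℂ] M) :
    WithLp 2 (H × M) →L[ℂ] WithLp 2 (H × M) :=
  ((WithLp.prodContinuousLinearEquiv 2 ℂ H M).symm : H × M →L[ℂ] WithLp 2 (H × M)) ∘L
    ((T ∘L fst ℂ H M + A ∘L snd ℂ H M).prod (B ∘L snd ℂ H M)) ∘L
    ((WithLp.prodContinuousLinearEquiv 2 ℂ H M) : WithLp 2 (H × M) →L[ℂ] H × M)

/-- A tuple of commuting contractions is extremal if every block extension
`X_i (h, m) = (T_i h + A_i m, B_i m)` by commuting contractions has `A_i = 0` for all `i`. -/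
def IsExtremal {n : ℕ} {H : Type*} [NormedAddCommGroup H] [InnerProductSpace ℂ H]
    [CompleteSpace H] (T : Fin n → H →L[ℂ] H) : Prop :=
  ∀ (M : Type*) [NormedAddCommGroup M] [InnerProductSpace ℂ M] [CompleteSpace M],
    ∀ (A : Fin n → M →L[ℂ] H) (B : Fin n → M →L[ℂ] M),
      (∀ i, ‖blockOp (T i) (A i) (B i)‖ ≤ 1) →
      (∀ i j, blockOp (T i) (A i) (B i) ∘L blockOp (T j) (A j) (B j)
            = blockOp (T j) (A j) (B j) ∘L blockOp (T i) (A i) (B i)) →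
      ∀ i, A i = 0

/-!
Look for a block extension with `B_i = 0`. The operators `X_i (h, m) = (T_i h + A_i m, 0)` commute
as soon as `T_i A_j = T_j A_i`. If moreover the range of `A_i` is orthogonal to that of `T_i`, i.e.
`T_i⋆ A_i = 0`, then by the Pythagorean theorem `X_i` is a contraction whenever `A_i` is one, which
rescaling achieves. On the line `M = ℂ` the `A_i` are vectors `e_i`, and a joint kernel vector `e`
of all `T_i` and `T_i⋆` provides the constant choice `e_i = e`.
-/

universe u v

section BlockOp

variable {H M : Type*} [NormedAddCommGroup H] [InnerProductSpace ℂ H]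
  [NormedAddCommGroup M] [InnerProductSpace ℂ M]

theorem blockOp_apply (T : H →L[ℂ] H) (A : M →L[ℂ] H) (B : M →L[ℂ] M) (x : WithLp 2 (H × M)) :
    blockOp T A B x = WithLp.toLp 2 (T x.fst + A x.snd, B x.snd) :=
  rfl

theorem blockOp_comp_blockOp (T T' : H →L[ℂ] H) (A A' : M →L[ℂ] H) (B B' : M →L[ℂ] M) :
    blockOp T A B ∘L blockOp T' A' B' =
      blockOp (T ∘L T') (T ∘L A' + A ∘L B') (B ∘L B') := by
  ext1 x
  simp [blockOp_apply, add_assoc]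

theorem norm_blockOp_zero_le_max_of_inner_eq_zero {T : H →L[ℂ] H} {A : M →L[ℂ] H}
    (horth : ∀ h m, inner ℂ (T h) (A m) = 0) :
    ‖blockOp T A 0‖ ≤ max ‖T‖ ‖A‖ := by
  have hmax : 0 ≤ max ‖T‖ ‖A‖ := le_max_of_le_left (norm_nonneg T)
  refine ContinuousLinearMap.opNorm_le_bound _ hmax fun x => ?_
  have hT : ‖T x.fst‖ ≤ max ‖T‖ ‖A‖ * ‖x.fst‖ := T.le_of_opNorm_le (le_max_left _ _) _
  have hA : ‖A x.snd‖ ≤ max ‖T‖ ‖A‖ * ‖x.snd‖ := A.le_of_opNorm_le (le_max_right _ _) _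
  refine le_of_sq_le_sq ?_ (by positivity)
  calc ‖blockOp T A 0 x‖ ^ 2
      = ‖T x.fst + A x.snd‖ ^ 2 := by simp [blockOp_apply]
    _ = ‖T x.fst‖ ^ 2 + ‖A x.snd‖ ^ 2 := by
      simpa only [sq] using
        norm_add_sq_eq_norm_sq_add_norm_sq_of_inner_eq_zero _ _ (horth x.fst x.snd)
    _ ≤ (max ‖T‖ ‖A‖ * ‖x.fst‖) ^ 2 + (max ‖T‖ ‖A‖ * ‖x.snd‖) ^ 2 := by gcongr
    _ = (max ‖T‖ ‖A‖ * ‖x‖) ^ 2 := by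
      rw [mul_pow _ ‖x‖, WithLp.prod_norm_sq_eq_of_L2]
      ring

end BlockOp

section Extremal

variable {H : Type u} [NormedAddCommGroup H] [InnerProductSpace ℂ H] [CompleteSpace H]
  {n : ℕ} {T : Fin n → H →L[ℂ] H}

theorem IsExtremal.eq_zero_of_adjoint_comp_eq_zero {M : Type v} [NormedAddCommGroup M]
    [InnerProductSpace ℂ M] [CompleteSpace M] (hT : IsExtremal.{u, v} T)
    (hcontr : ∀ i, ‖T i‖ ≤ 1) (hcomm : ∀ i j, T i ∘L T j = T j ∘L T i)
    {A : Fin n → M →L[ℂ] H} (hsymm : ∀ i j, T i ∘L A j = T j ∘L A i)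
    (hadj : ∀ i, (T i).adjoint ∘L A i = 0) : A = 0 := by
  by_contra hA
  let c : ℂ := (‖A‖ : ℂ)⁻¹
  have hnorm : ‖c • A‖ = 1 := norm_smul_inv_norm hA
  have horth (i : Fin n) (h : H) (m : M) : inner ℂ (T i h) ((c • A) i m) = 0 := by
    have hAm : (T i).adjoint (A i m) = 0 := DFunLike.congr_fun (hadj i) m
    simp [← ContinuousLinearMap.adjoint_inner_right, hAm]
  have hle (i : Fin n) : ‖blockOp (T i) ((c • A) i) 0‖ ≤ 1 :=
    (norm_blockOp_zero_le_max_of_inner_eq_zero (horth i)).trans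
      (max_le (hcontr i) ((norm_le_pi_norm _ i).trans hnorm.le))
  have hzero : c • A = 0 := funext <| hT M (c • A) 0 hle fun i j => by
    simp [blockOp_comp_blockOp, hcomm i j, hsymm i j]
  rw [hzero, norm_zero] at hnorm
  exact zero_ne_one hnorm

theorem statement0_general (hcontr : ∀ i, ‖T i‖ ≤ 1) (hcomm : ∀ i j, T i ∘L T j = T j ∘L T i)
    {e : Fin n → H} (he : e ≠ 0) (hsymm : ∀ i j, T i (e j) = T j (e i))
    (hadj : ∀ i, (T i).adjoint (e i) = 0) : ¬ IsExtremal.{u, v} T := by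
  intro hT
  -- `PUnit.{v + 1}` places the line `ℂ` in the universe over which `IsExtremal` quantifies.
  let coord : EuclideanSpace ℂ PUnit.{v + 1} →L[ℂ] ℂ := EuclideanSpace.proj PUnit.unit
  have hzero : (fun i => coord.smulRight (e i)) = 0 :=
    hT.eq_zero_of_adjoint_comp_eq_zero hcontr hcomm
      (fun i j => by ext m; simp [hsymm i j]) (fun i => by ext m; simp [hadj i])
  refine he (funext fun i => ?_)
  simpa [coord] using
    DFunLike.congr_fun (congr_fun hzero i) (EuclideanSpace.single PUnit.unit 1)

end Extremal

/-- If `T_1, …, T_n` are commuting contractions on a Hilbert space `H` and some nonzero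
`e ∈ H` satisfies `T_i e = 0` and `T_i⋆ e = 0` for every `i`, then `T` is not extremal. -/
theorem statement0 {H : Type*} [NormedAddCommGroup H] [InnerProductSpace ℂ H] [CompleteSpace H]
    {n : ℕ} (hn : 1 ≤ n) (T : Fin n → H →L[ℂ] H)
    (hcontr : ∀ i, ‖T i‖ ≤ 1)
    (hcomm : ∀ i j, T i ∘L T j = T j ∘L T i)
    (e : H) (he : e ≠ 0)
    (hker : ∀ i, T i e = 0)
    (hker' : ∀ i, ContinuousLinearMap.adjoint (T i) e = 0) :
    ¬ IsExtremal T :=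
  statement0_general hcontr hcomm (e := fun _ => e) (Function.ne_iff.mpr ⟨⟨0, hn⟩, he⟩)
    (fun i j => by rw [hker i, hker j]) hker'
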